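/- Let p ∈ (0,1) be fixed. There exists a constant δ > 0 such that with high probability the following holds for G(n,p): for every set S ⊆ [n] of at most ⌊δn⌋ vertices, the diameter of the graph obtained from G(n,p) by deleting the vertices of S equals the diameter of G(n,p). -/

import Mathlib

open MeasureTheory Filter Real

/-- The index type of potential edges of a graph on `Fin n`. -/
abbrev EdgeType (n : ℕ) := {e : Sym2 (Fin n) // ¬ e.IsDiag}

/-- The product Bernoulli measure on edge-indicator functions: the binomial
random graph `G(n,p)`. -/
noncomputable def erMeasure (n : ℕ) (p : ℝ) : Measure (EdgeType n → Bool) :=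
  Measure.pi fun _ => (PMF.bernoulli (min (Real.toNNReal p) 1) (min_le_right _ _)).toMeasure

/-- The simple graph determined by an edge-indicator function. -/
def graphOf {n : ℕ} (ω : EdgeType n → Bool) : SimpleGraph (Fin n) :=
  SimpleGraph.fromEdgeSet {e | ∃ h : ¬ e.IsDiag, ω ⟨e, h⟩ = true}

/-- `H` contains a (not necessarily induced) copy of `F`. -/
def ContainsCopy {α β : Type*} (F : SimpleGraph α) (H : SimpleGraph β) : Prop :=
  ∃ f : α → β, Function.Injective f ∧ ∀ ⦃a b⦄, F.Adj a b → H.Adj (f a) (f b)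

/-- `H` is `F`-saturated in `G`: `H` is a spanning subgraph of `G` that is `F`-free,
and adding any edge of `G` missing from `H` creates a copy of `F`. -/
def IsSaturatedIn {V : Type*} {α : Type*} (G H : SimpleGraph V) (F : SimpleGraph α) : Prop :=
  H ≤ G ∧ ¬ ContainsCopy F H ∧
    ∀ v w : V, G.Adj v w → ¬ H.Adj v w →
      ContainsCopy F (H ⊔ SimpleGraph.fromEdgeSet {s(v, w)})

/-- The saturation number `sat(G,F)`: the minimum number of edges of an
`F`-saturated spanning subgraph of `G`. -/
noncomputable def satNum {V α : Type*} (G : SimpleGraph V) (F : SimpleGraph α) : ℕ :=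
  sInf {k | ∃ H : SimpleGraph V, IsSaturatedIn G H F ∧ H.edgeSet.ncard = k}

/-- The cycle `C_m`, as a graph on `ZMod m`. -/
def cycGraph (m : ℕ) : SimpleGraph (ZMod m) :=
  SimpleGraph.fromRel (fun a b => a = b + 1)

/-! A given pair of vertices has about `p²n` common neighbours, and by Hoeffding's inequality
the probability that it has fewer than half as many is exponentially small in `n`. By the union
bound, with high probability every pair has more than `δn` common neighbours; the same applies to
the complement, which is distributed as `G(n,1-p)`. Deleting at most `δn` vertices leaves a common
neighbour of every remaining pair and a non-adjacent pair, so the diameter is `2` both before and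
after the deletion. -/

open ProbabilityTheory Function Topology Finset

section Codegree

variable {V : Type*} {G : SimpleGraph V} {k l : ℕ} {S : Set V}

theorem ediam_le_two_of_commonNeighbors_nonempty
    (hG : Pairwise fun u v ↦ (G.commonNeighbors u v).Nonempty) : G.ediam ≤ 2 := by
  refine SimpleGraph.ediam_le_of_edist_le fun u v ↦ ?_
  obtain rfl | huv := eq_or_ne u v
  · simp
  · obtain ⟨w, huw, hvw⟩ := hG huv
    exact SimpleGraph.edist_le (.cons huw (.cons hvw.symm .nil))

theorem two_le_ediam_of_ne_top (hG : G ≠ ⊤) : 2 ≤ G.ediam := by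
  have : Nontrivial V := not_subsingleton_iff_nontrivial.mp fun _ ↦ hG (Subsingleton.elim G ⊤)
  have one_le : 1 ≤ G.ediam := Order.one_le_iff_ne_zero.mpr SimpleGraph.ediam_ne_zero
  have one_lt : 1 < G.ediam := one_le.lt_of_ne' (SimpleGraph.ediam_eq_one.not.mpr hG)
  simpa only [one_add_one_eq_two] using Order.add_one_le_of_lt one_lt

/-- All codegrees of `G` exceed `k`: any two distinct vertices have more than `k` common
neighbours. -/
def CodegreesExceed (G : SimpleGraph V) (k : ℕ) : Prop :=
  Pairwise fun u v ↦ k < (G.commonNeighbors u v).ncard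

namespace CodegreesExceed

theorem mono (hG : CodegreesExceed G l) (hkl : k ≤ l) : CodegreesExceed G k :=
  Pairwise.mono hG fun _ _ ↦ hkl.trans_lt

theorem commonNeighbors_nonempty (hG : CodegreesExceed G k) :
    Pairwise fun u v ↦ (G.commonNeighbors u v).Nonempty :=
  Pairwise.mono hG fun _ _ h ↦ Set.nonempty_of_ncard_ne_zero h.ne_bot

theorem ediam_eq_two [Nontrivial V] (hG : CodegreesExceed G k) (hGc : CodegreesExceed Gᶜ k) :
    G.ediam = 2 := by
  refine (ediam_le_two_of_commonNeighbors_nonempty hG.commonNeighbors_nonempty).antisymm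
    (two_le_ediam_of_ne_top ?_)
  rintro rfl
  obtain ⟨u, v, huv⟩ := exists_pair_ne V
  obtain ⟨w, huw, -⟩ := hGc.commonNeighbors_nonempty huv
  simp at huw

theorem induce_compl [Finite V] (hG : CodegreesExceed G (k + S.ncard)) :
    CodegreesExceed (G.induce Sᶜ) k := by
  intro u v huv
  have image_eq : (↑) '' (G.induce Sᶜ).commonNeighbors u v = G.commonNeighbors u v \ S := by
    ext w
    simp [SimpleGraph.mem_commonNeighbors, and_assoc, and_comm (a := w ∉ S)]
  rw [← Set.ncard_image_of_injective _ Subtype.val_injective, image_eq]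
  have := hG (Subtype.val_injective.ne huv)
  have := Set.le_ncard_sdiff S (G.commonNeighbors u v)
  omega

theorem nontrivial_compl [Finite V] [Nontrivial V] (hG : CodegreesExceed G S.ncard) :
    Nontrivial ↥Sᶜ := by
  have exists_ne (v : V) : ∃ w ∉ S, w ≠ v := by
    obtain ⟨u, huv⟩ := _root_.exists_ne v
    obtain ⟨w, hw, hwS⟩ := Set.exists_mem_notMem_of_ncard_lt_ncard (hG huv)
    exact ⟨w, hwS, hw.2.ne'⟩
  obtain ⟨v, hv, -⟩ := exists_ne (Classical.arbitrary V)
  obtain ⟨w, hw, hwv⟩ := exists_ne v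
  exact ⟨⟨v, hv⟩, ⟨w, hw⟩, fun h ↦ hwv (congrArg Subtype.val h).symm⟩

theorem ediam_induce_compl_eq_two [Finite V] [Nontrivial V] (hG : CodegreesExceed G S.ncard)
    (hGc : CodegreesExceed Gᶜ S.ncard) : (G.induce Sᶜ).ediam = 2 := by
  have := hG.nontrivial_compl
  have induce_compl_eq : (G.induce Sᶜ)ᶜ = Gᶜ.induce Sᶜ := by
    ext u v
    simp [Subtype.ext_iff]
  rw [← Nat.zero_add S.ncard] at hG hGc
  exact hG.induce_compl.ediam_eq_two (induce_compl_eq ▸ hGc.induce_compl)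

end CodegreesExceed

end Codegree

section Probability

theorem iIndepSet_pi_of_pairwise_disjoint {E ι : Type*} [Fintype E] {X : E → Type*}
    [∀ e, MeasurableSpace (X e)] (ν : ∀ e, Measure (X e)) [∀ e, IsProbabilityMeasure (ν e)]
    {s : ∀ e, Set (X e)} (hs : ∀ e, MeasurableSet (s e)) {T : ι → Finset E}
    (hT : Pairwise (Disjoint on T)) :
    iIndepSet (fun i ↦ (T i : Set E).pi s) (Measure.pi ν) := by
  classical
  rw [iIndepSet_iff_meas_biInter fun i ↦ .pi (T i).countable_toSet fun e _ ↦ hs e]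
  intro I
  have inter_eq : ⋂ i ∈ I, (T i : Set E).pi s = (I.biUnion T : Set E).pi s := by
    ext ω
    simp only [Set.mem_iInter, Set.mem_pi, coe_biUnion, Set.mem_iUnion]
    grind
  rw [inter_eq, Measure.pi_pi_finset, prod_biUnion (hT.set_pairwise _)]
  simp only [Measure.pi_pi_finset]

theorem measureReal_ncard_le_sum_sub_le {Ω ι : Type*} [MeasurableSpace Ω] [Fintype ι]
    {μ : Measure Ω} {A : ι → Set Ω} (hAm : ∀ i, MeasurableSet (A i)) (hA : iIndepSet A μ)
    {t : ℝ} (ht : 0 ≤ t) :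
    μ.real {ω | ({i | ω ∈ A i}.ncard : ℝ) ≤ ∑ i, μ.real (A i) - t} ≤
      exp (-2 * t ^ 2 / Fintype.card ι) := by
  classical
  have := hA.isProbabilityMeasure
  let X (i : ι) : Ω → ℝ := fun ω ↦ μ.real (A i) - (A i).indicator 1 ω
  have X_indep : iIndepFun X μ :=
    hA.iIndepFun_indicator.comp (fun i x ↦ μ.real (A i) - x) fun i ↦ by fun_prop
  have X_measurable (i : ι) : Measurable (X i) :=
    measurable_const.sub (measurable_one.indicator (hAm i))
  have X_mem_Icc (i : ι) (ω : Ω) : X i ω ∈ Set.Icc (μ.real (A i) - 1) (μ.real (A i)) := by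
    by_cases hω : ω ∈ A i <;> simp [X, hω]
  have X_mean (i : ι) : μ[X i] = 0 := by
    rw [integral_sub (integrable_const _) ((integrable_const 1).indicator (hAm i)),
      integral_indicator_one (hAm i)]
    simp
  have X_subgaussian (i : ι) := hasSubgaussianMGF_of_mem_Icc_of_integral_eq_zero
    (X_measurable i).aemeasurable (.of_forall (X_mem_Icc i)) (X_mean i)
  have X_sum (ω : Ω) : ∑ i, X i ω = ∑ i, μ.real (A i) - {i | ω ∈ A i}.ncard := by
    simp [X, Set.indicator_apply, Set.ncard_eq_toFinset_card']
  have hoeffding := HasSubgaussianMGF.measure_sum_ge_le_of_iIndepFun X_indep (s := univ)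
    (fun i _ ↦ X_subgaussian i) ht
  simp only [X_sum, le_sub_comm (a := t)] at hoeffding
  convert hoeffding using 2
  simp only [sub_sub_cancel, nnnorm_one, sum_const, card_univ, nsmul_eq_mul]
  push_cast
  ring

end Probability

section BinomialRandomGraph

variable {n : ℕ}

instance isProbabilityMeasure_erMeasure (n : ℕ) (p : ℝ) :
    IsProbabilityMeasure (erMeasure n p) := by
  unfold erMeasure
  infer_instance

theorem erMeasure_eq_pi_bernoulliMeasure (n : ℕ) (p : unitInterval) :
    erMeasure n p = Measure.pi fun _ ↦ Ber(true, false, p) := by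
  unfold erMeasure
  congr! 2
  refine Measure.ext_of_singleton fun b ↦ ?_
  have hp : min (Real.toNNReal p) 1 = unitInterval.toNNReal p := by
    ext
    simp [p.2.1, p.2.2]
  rw [PMF.toMeasure_apply_singleton _ _ (measurableSet_singleton b), PMF.bernoulli_apply]
  cases b
  · have hp' : 1 - unitInterval.toNNReal p = unitInterval.toNNReal (unitInterval.symm p) :=
      tsub_eq_of_eq_add (unitInterval.toNNReal_symm_add_toNNReal p).symm
    simp [hp, ← hp']
  · simp [hp]

theorem erMeasure_real_pi_true (p : unitInterval) (T : Finset (EdgeType n)) :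
    (erMeasure n p).real ((T : Set (EdgeType n)).pi fun _ ↦ {true}) = p ^ #T := by
  rw [erMeasure_eq_pi_bernoulliMeasure, measureReal_def, Measure.pi_pi_finset]
  simp

theorem map_not_erMeasure (n : ℕ) (p : unitInterval) :
    (erMeasure n p).map (fun ω e ↦ !ω e) = erMeasure n (unitInterval.symm p) := by
  simp only [erMeasure_eq_pi_bernoulliMeasure]
  rw [Measure.pi_map_pi fun _ ↦ (measurable_of_finite not).aemeasurable]
  simp only [map_bernoulliMeasure]
  simp [bernoulliMeasure_def, add_comm]

theorem graphOf_adj {ω : EdgeType n → Bool} {u v : Fin n} (huv : u ≠ v) :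
    (graphOf ω).Adj u v ↔ ω ⟨s(u, v), by simpa using huv⟩ = true := by
  simp [graphOf, huv]

theorem graphOf_not (ω : EdgeType n → Bool) : graphOf (fun e ↦ !ω e) = (graphOf ω)ᶜ := by
  ext u v
  obtain rfl | huv := eq_or_ne u v
  · simp
  · simp [graphOf_adj, huv]

/-- The edges from `w` to `u` and `v`, whose joint presence makes `w` a common neighbour of `u`
and `v`. Restricting to non-diagonal pairs discards the loops that arise if `w` is `u` or `v`. -/
def cherry (u v w : Fin n) : Finset (EdgeType n) :=
  ({s(u, w), s(v, w)} : Finset (Sym2 (Fin n))).subtype _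

theorem mem_cherry {u v w : Fin n} {e : EdgeType n} :
    e ∈ cherry u v w ↔ e.1 = s(u, w) ∨ e.1 = s(v, w) := by
  simp [cherry]

theorem card_cherry {u v w : Fin n} (huv : u ≠ v) (huw : u ≠ w) (hvw : v ≠ w) :
    #(cherry u v w) = 2 := by
  rw [cherry, card_subtype, filter_true_of_mem (by simp [huw, hvw]),
    card_pair (by simp [huv, huw])]

theorem disjoint_cherry {u v w w' : Fin n} (hww' : w ≠ w') (huw : u ≠ w) (hvw : v ≠ w) :
    Disjoint (cherry u v w) (cherry u v w') := by
  rw [disjoint_left]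
  intro e he he'
  rw [mem_cherry] at he he'
  have hw : w ∈ e.1 := by rcases he with he | he <;> simp [he]
  rcases he' with he' | he' <;> simp [he', hww', huw.symm, hvw.symm] at hw

theorem mem_pi_cherry_iff {ω : EdgeType n → Bool} {u v w : Fin n} (huw : u ≠ w) (hvw : v ≠ w) :
    ω ∈ (cherry u v w : Set (EdgeType n)).pi (fun _ ↦ {true}) ↔
      w ∈ (graphOf ω).commonNeighbors u v := by
  simp only [Set.mem_pi, Finset.mem_coe, mem_cherry, Set.mem_singleton_iff, or_imp, forall_and,
    SimpleGraph.mem_commonNeighbors, graphOf_adj huw, graphOf_adj hvw]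
  simp only [Subtype.forall]
  grind

theorem erMeasure_real_ncard_commonNeighbors_le (p : unitInterval) {u v : Fin n} (huv : u ≠ v) :
    (erMeasure n p).real
        {ω | (((graphOf ω).commonNeighbors u v).ncard : ℝ) ≤ p ^ 2 / 2 * (n - 2)} ≤
      exp (-(p ^ 4 / 2 * (n - 2))) := by
  let W : Finset (Fin n) := {u, v}ᶜ
  have ne_of_mem (w : W) : u ≠ w ∧ v ≠ w := by
    simpa only [W, mem_compl, mem_insert, mem_singleton, not_or, ne_comm] using w.2
  have two_le : 2 ≤ n := Fin.nontrivial_iff_two_le.mp ⟨u, v, huv⟩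
  have card_W : (Fintype.card W : ℝ) = n - 2 := by
    rw [Fintype.card_coe, card_compl, card_pair huv, Fintype.card_fin, Nat.cast_sub two_le,
      Nat.cast_two]
  let A (w : W) : Set (EdgeType n → Bool) := (cherry u v w : Set (EdgeType n)).pi fun _ ↦ {true}
  have A_indep : iIndepSet A (erMeasure n p) :=
    iIndepSet_pi_of_pairwise_disjoint _ (fun _ ↦ measurableSet_singleton true) fun w w' hww' ↦
      disjoint_cherry (Subtype.val_injective.ne hww') (ne_of_mem w).1 (ne_of_mem w).2
  have A_prob (w : W) : (erMeasure n p).real (A w) = p ^ 2 := by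
    rw [erMeasure_real_pi_true, card_cherry huv (ne_of_mem w).1 (ne_of_mem w).2]
  have ncard_le (ω : EdgeType n → Bool) :
      {w | ω ∈ A w}.ncard ≤ ((graphOf ω).commonNeighbors u v).ncard :=
    Set.ncard_le_ncard_of_injOn (↑)
      (fun w hw ↦ (mem_pi_cherry_iff (ne_of_mem w).1 (ne_of_mem w).2).mp hw)
      Subtype.val_injective.injOn
  have n_sub_two_nonneg : (0 : ℝ) ≤ n - 2 := sub_nonneg.mpr (by exact_mod_cast two_le)
  calc
    _ ≤ (erMeasure n p).real {ω | ({w | ω ∈ A w}.ncard : ℝ) ≤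
          ∑ w, (erMeasure n p).real (A w) - p ^ 2 / 2 * (n - 2)} := by
      refine measureReal_mono fun ω hω ↦ ?_
      simp only [A_prob, sum_const, card_univ, nsmul_eq_mul, card_W, Set.mem_ofPred_eq] at hω ⊢
      linarith [(Nat.cast_le (α := ℝ)).mpr (ncard_le ω)]
    _ ≤ exp (-2 * (p ^ 2 / 2 * (n - 2)) ^ 2 / Fintype.card W) :=
      measureReal_ncard_le_sum_sub_le (fun _ ↦ (Set.toFinite _).measurableSet) A_indep
        (by positivity)
    _ = exp (-(p ^ 4 / 2 * (n - 2))) := by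
      rw [card_W]
      congr 1
      obtain h | h := eq_or_ne (n - 2 : ℝ) 0
      · simp [h]
      · field_simp

theorem erMeasure_real_not_codegreesExceed_le (n : ℕ) (p : unitInterval) :
    (erMeasure n p).real {ω | ¬ CodegreesExceed (graphOf ω) ⌊(p ^ 2 / 2 * (n - 2) : ℝ)⌋₊} ≤
      n ^ 2 * exp (-(p ^ 4 / 2 * (n - 2))) := by
  let B (u v : Fin n) : Set (EdgeType n → Bool) :=
    {ω | (((graphOf ω).commonNeighbors u v).ncard : ℝ) ≤ p ^ 2 / 2 * (n - 2)}
  have subset_biUnion : {ω | ¬ CodegreesExceed (graphOf ω) ⌊(p ^ 2 / 2 * (n - 2) : ℝ)⌋₊} ⊆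
      ⋃ q ∈ (univ : Finset (Fin n)).offDiag, B q.1 q.2 := by
    intro ω hω
    obtain ⟨u, v, huv, hle⟩ : ∃ u v, u ≠ v ∧
        ((graphOf ω).commonNeighbors u v).ncard ≤ ⌊(p ^ 2 / 2 * (n - 2) : ℝ)⌋₊ := by
      simpa [CodegreesExceed, Pairwise] using hω
    have two_le : (2 : ℝ) ≤ n := by exact_mod_cast Fin.nontrivial_iff_two_le.mp ⟨u, v, huv⟩
    have nonneg : (0 : ℝ) ≤ p ^ 2 / 2 * (n - 2) := mul_nonneg (by positivity) (by linarith)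
    simp only [Set.mem_iUnion]
    exact ⟨(u, v), by simpa using huv, (Nat.le_floor_iff nonneg).mp hle⟩
  calc
    _ ≤ ∑ q ∈ (univ : Finset (Fin n)).offDiag, (erMeasure n p).real (B q.1 q.2) :=
      (measureReal_mono subset_biUnion (measure_ne_top _ _)).trans
        (measureReal_biUnion_finset_le _ _)
    _ ≤ #(univ : Finset (Fin n)).offDiag • exp (-(p ^ 4 / 2 * (n - 2))) :=
      sum_le_card_nsmul _ _ _ fun q hq ↦
        erMeasure_real_ncard_commonNeighbors_le p (mem_offDiag.mp hq).2.2
    _ ≤ n ^ 2 * exp (-(p ^ 4 / 2 * (n - 2))) := by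
      rw [nsmul_eq_mul]
      gcongr
      norm_cast
      simp [offDiag_card, sq]

/-- The property `P` holds with high probability for `G(n,p)`. -/
def WithHighProbability (p : ℝ) (P : (n : ℕ) → SimpleGraph (Fin n) → Prop) : Prop :=
  Tendsto (fun n ↦ erMeasure n p {ω | P n (graphOf ω)}) atTop (𝓝 1)

section WithHighProbability

variable {p : ℝ} {P Q : (n : ℕ) → SimpleGraph (Fin n) → Prop}

theorem withHighProbability_iff_tendsto_not : WithHighProbability p P ↔
    Tendsto (fun n ↦ (erMeasure n p).real {ω | ¬ P n (graphOf ω)}) atTop (𝓝 0) := by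
  have real_not (n : ℕ) : (erMeasure n p).real {ω | ¬ P n (graphOf ω)} =
      1 - (erMeasure n p).real {ω | P n (graphOf ω)} :=
    probReal_compl_eq_one_sub (Set.toFinite _).measurableSet
  rw [WithHighProbability,
    ← ENNReal.tendsto_toReal_iff (fun _ ↦ measure_ne_top _ _) ENNReal.one_ne_top]
  simp only [real_not, ENNReal.toReal_one]
  constructor <;> intro h <;> simpa [measureReal_def] using h.const_sub 1

namespace WithHighProbability

theorem and (hP : WithHighProbability p P) (hQ : WithHighProbability p Q) :
    WithHighProbability p fun n G ↦ P n G ∧ Q n G := by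
  rw [withHighProbability_iff_tendsto_not] at *
  refine squeeze_zero (fun _ ↦ measureReal_nonneg) (fun n ↦ ?_) (by simpa using hP.add hQ)
  simp only [not_and_or]
  exact measureReal_union_le _ _

theorem mono (hP : WithHighProbability p P) (hPQ : ∀ᶠ n in atTop, ∀ G, P n G → Q n G) :
    WithHighProbability p Q := by
  refine tendsto_of_tendsto_of_tendsto_of_le_of_le' hP tendsto_const_nhds ?_
    (.of_forall fun _ ↦ prob_le_one)
  filter_upwards [hPQ] with n hn
  exact measure_mono fun ω ↦ hn _

theorem compl {p : unitInterval} (hP : WithHighProbability (unitInterval.symm p) P) :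
    WithHighProbability p fun n G ↦ P n Gᶜ := by
  unfold WithHighProbability at *
  simpa only [← map_not_erMeasure, Measure.map_apply (measurable_of_finite _)
    (Set.toFinite _).measurableSet, Set.preimage_ofPred_eq, graphOf_not] using hP

end WithHighProbability

end WithHighProbability

theorem exists_withHighProbability_codegreesExceed {p : unitInterval} (hp : 0 < p) :
    ∃ δ > (0 : ℝ), WithHighProbability p fun n G ↦ CodegreesExceed G ⌊δ * n⌋₊ := by
  have hp' : (0 : ℝ) < p := hp
  refine ⟨p ^ 2 / 4, by positivity, ?_⟩
  have whp_codegrees : WithHighProbability p fun n G ↦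
      CodegreesExceed G ⌊(p ^ 2 / 2 * (n - 2) : ℝ)⌋₊ := by
    refine withHighProbability_iff_tendsto_not.mpr <| squeeze_zero
      (fun _ ↦ measureReal_nonneg) (fun n ↦ erMeasure_real_not_codegreesExceed_le n p) ?_
    have exp_eq (n : ℕ) : (n : ℝ) ^ 2 * exp (-(p ^ 4 / 2 * (n - 2))) =
        exp (p ^ 4) * (n ^ 2 * exp (-(p ^ 4 / 2)) ^ n) := by
      rw [← exp_nat_mul, mul_left_comm, ← exp_add]
      ring_nf
    have decay_lt_one : exp (-(p ^ 4 / 2) : ℝ) < 1 := by simp [hp']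
    simp only [exp_eq]
    simpa using (tendsto_pow_const_mul_const_pow_of_lt_one 2 (exp_nonneg _) decay_lt_one).const_mul
      (exp (p ^ 4 : ℝ))
  refine whp_codegrees.mono ?_
  filter_upwards [eventually_ge_atTop 4] with n hn G hG
  have four_le : (4 : ℝ) ≤ n := by exact_mod_cast hn
  exact hG.mono (Nat.floor_le_floor (by nlinarith [sq_pos_of_pos hp']))

end BinomialRandomGraph

/-- For fixed `p ∈ (0,1)` there is `δ > 0` such that whp,
deleting any set of at most `⌊δn⌋` vertices from `G(n,p)` does not change its
diameter. -/
theorem diameter_stable_under_deletion (p : ℝ) (hp0 : 0 < p) (hp1 : p < 1) :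
    ∃ δ > (0 : ℝ),
      Tendsto (fun n : ℕ =>
        erMeasure n p {ω |
          ∀ S : Set (Fin n), S.ncard ≤ ⌊δ * n⌋₊ →
            ((graphOf ω).induce Sᶜ).ediam = (graphOf ω).ediam})
        atTop (nhds 1) := by
  let q : unitInterval := ⟨p, hp0.le, hp1.le⟩
  obtain ⟨δ₁, hδ₁, whp_codegrees⟩ := exists_withHighProbability_codegreesExceed (p := q) hp0
  obtain ⟨δ₂, hδ₂, whp_codegrees_compl⟩ :=
    exists_withHighProbability_codegreesExceed (p := unitInterval.symm q) (sub_pos.mpr hp1)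
  refine ⟨min δ₁ δ₂, lt_min hδ₁ hδ₂, ?_⟩
  change WithHighProbability q fun n G ↦ ∀ S : Set (Fin n), S.ncard ≤ ⌊min δ₁ δ₂ * n⌋₊ →
    (G.induce Sᶜ).ediam = G.ediam
  refine (whp_codegrees.and whp_codegrees_compl.compl).mono ?_
  filter_upwards [eventually_ge_atTop 2] with n hn G ⟨hG, hGc⟩ S hS
  have : Nontrivial (Fin n) := Fin.nontrivial_iff_two_le.mpr hn
  have le₁ : S.ncard ≤ ⌊δ₁ * n⌋₊ := hS.trans (by gcongr; exact min_le_left _ _)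
  have le₂ : S.ncard ≤ ⌊δ₂ * n⌋₊ := hS.trans (by gcongr; exact min_le_right _ _)
  have hG' := hG.mono le₁
  have hGc' := hGc.mono le₂
  rw [hG'.ediam_induce_compl_eq_two hGc', hG'.ediam_eq_two hGc']
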